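/- Let p be a prime, α a positive integer, d = p^α, and let β, γ be integers with 0 ≤ β, γ < α. Let u₁, v₁, u₂, v₂ be integers with 0 ≤ u₁, v₁ < p^{α−γ} and 0 ≤ u₂, v₂ < p^{α−β}. There exists a unitary matrix W on ℂ^{p^α} with W X^{p^γ} W† ≈ X^{u₁ p^γ} Z^{v₁ p^γ} and W Z^{p^β} W† ≈ X^{u₂ p^β} Z^{v₂ p^β} if and only if all three of the following hold: (1) gcd(u₁, v₁, p) = 1 = gcd(u₂, v₂, p); (2) (u₁v₂ − u₂v₁)·p^{β+γ} ≡ p^{β+γ} (mod p^α); and (3) gcd(u₁v₂ − u₂v₁, p) = 1. -/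

import Mathlib

open Matrix

/-- The primitive `d`-th root of unity `ω = e^{2πi/d}`. -/
noncomputable def omega (d : ℕ) : ℂ := Complex.exp (2 * Real.pi * Complex.I / d)

/-- The power `X^s` (for any integer `s`) of the shift matrix `X` on `ℂ^d`,
`X|j⟩ = |j+1 mod d⟩`; its `(i,j)` entry is `1` iff `i ≡ j + s (mod d)`. -/
def Xpow (d : ℕ) (s : ℤ) : Matrix (Fin d) (Fin d) ℂ :=
  Matrix.of fun i j => if (i : ℤ) = (((j : ℕ) : ℤ) + s) % (d : ℤ) then (1 : ℂ) else 0

/-- The power `Z^t` (for any integer `t`) of the clock matrix `Z` on `ℂ^d`,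
`Z|j⟩ = ω^j |j⟩`; it is diagonal with entries `ω^{t·j} = e^{2πi·t·j/d}`. -/
noncomputable def Zpow (d : ℕ) (t : ℤ) : Matrix (Fin d) (Fin d) ℂ :=
  Matrix.diagonal fun j => Complex.exp (2 * Real.pi * Complex.I * (t : ℂ) * ((j : ℕ) : ℂ) / (d : ℂ))

/-- The generalized Pauli matrix `X^s Z^t` on `ℂ^d`. -/
noncomputable def GPM (d : ℕ) (s t : ℤ) : Matrix (Fin d) (Fin d) ℂ :=
  Xpow d s * Zpow d t

/-- `A ≈ B` : equality up to a unimodular (global phase) scalar. -/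
def PhaseEq {n : Type*} (A B : Matrix n n ℂ) : Prop :=
  ∃ c : ℂ, ‖c‖ = 1 ∧ A = c • B


/-- The root of unity `e^{2πi·t/d}`. -/
noncomputable def rootPow (d : ℕ) (t : ℤ) : ℂ :=
  Complex.exp (2 * Real.pi * Complex.I * (t : ℂ) / (d : ℂ))

lemma rootPow_add (d : ℕ) (s t : ℤ) : rootPow d (s + t) = rootPow d s * rootPow d t := by
  rw [rootPow, rootPow, rootPow, ← Complex.exp_add]
  congr 1
  push_cast
  ring

lemma rootPow_ne_zero (d : ℕ) (t : ℤ) : rootPow d t ≠ 0 := Complex.exp_ne_zero _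

lemma norm_rootPow (d : ℕ) (t : ℤ) : ‖rootPow d t‖ = 1 := by
  have h : (2 * Real.pi * Complex.I * (t : ℂ) / (d : ℂ)) =
      ((2 * Real.pi * t / d : ℝ) : ℂ) * Complex.I := by
    push_cast
    ring
  rw [rootPow, h, Complex.norm_exp_ofReal_mul_I]

lemma star_rootPow (d : ℕ) (t : ℤ) : star (rootPow d t) = rootPow d (-t) := by
  rw [rootPow, rootPow, ← starRingEnd_apply, ← Complex.exp_conj]
  congr 1
  simp [Complex.conj_ofNat, neg_div]

lemma rootPow_eq_one_iff {d : ℕ} [NeZero d] {t : ℤ} : rootPow d t = 1 ↔ (d : ℤ) ∣ t := by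
  have hd : (d : ℂ) ≠ 0 := NeZero.ne _
  have hpi : (2 * Real.pi * Complex.I : ℂ) ≠ 0 := Complex.two_pi_I_ne_zero
  rw [rootPow, Complex.exp_eq_one_iff]
  refine exists_congr fun n => ⟨fun h => ?_, fun h => ?_⟩
  · field_simp at h
    have h2 : (t : ℂ) = d * n := by linear_combination h
    exact_mod_cast h2
  · subst h
    push_cast
    field_simp

lemma rootPow_eq_iff {d : ℕ} [NeZero d] {s t : ℤ} :
    rootPow d s = rootPow d t ↔ s ≡ t [ZMOD d] := by
  have h : rootPow d t = rootPow d (t - s) * rootPow d s := by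
    rw [← rootPow_add, sub_add_cancel]
  rw [Int.modEq_iff_dvd, ← rootPow_eq_one_iff, h, eq_comm,
    mul_eq_right₀ (rootPow_ne_zero d s)]

lemma fin_modEq_iff {d : ℕ} {i j : Fin d} :
    ((i : ℕ) : ℤ) ≡ ((j : ℕ) : ℤ) [ZMOD d] ↔ i = j := by
  rw [Int.natCast_modEq_iff, Fin.ext_iff]
  exact ⟨fun h => Nat.ModEq.eq_of_lt_of_lt h i.2 j.2, fun h => by rw [h]⟩

/-- The reduction of an integer modulo `d`. -/
def finOfInt (d : ℕ) [NeZero d] (x : ℤ) : Fin d :=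
  ⟨(x % d).toNat, by
    have := NeZero.pos d
    have := Int.emod_lt_of_pos x (b := d) (by omega)
    omega⟩

lemma finOfInt_modEq (d : ℕ) [NeZero d] (x : ℤ) :
    (((finOfInt d x : Fin d) : ℕ) : ℤ) ≡ x [ZMOD d] := by
  have := NeZero.pos d
  have h := Int.emod_nonneg x (b := d) (by omega)
  simp only [finOfInt, Int.toNat_of_nonneg h]
  exact Int.mod_modEq x d

lemma eq_finOfInt_iff {d : ℕ} [NeZero d] {i : Fin d} {x : ℤ} :
    i = finOfInt d x ↔ ((i : ℕ) : ℤ) ≡ x [ZMOD d] := by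
  rw [← fin_modEq_iff]
  exact ⟨fun h => h.trans (finOfInt_modEq d x), fun h => h.trans (finOfInt_modEq d x).symm⟩

lemma Xpow_apply (d : ℕ) (s : ℤ) (i j : Fin d) :
    Xpow d s i j = if ((i : ℕ) : ℤ) ≡ ((j : ℕ) : ℤ) + s [ZMOD d] then 1 else 0 := by
  have h : ((i : ℕ) : ℤ) % d = ((i : ℕ) : ℤ) :=
    Int.emod_eq_of_lt (by positivity) (by exact_mod_cast i.2)
  simp only [Xpow, Matrix.of_apply, Int.ModEq, h]

lemma Xpow_apply_eq_finOfInt {d : ℕ} [NeZero d] (s : ℤ) (i j : Fin d) :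
    Xpow d s i j = if i = finOfInt d (((j : ℕ) : ℤ) + s) then 1 else 0 := by
  simp only [Xpow_apply, eq_finOfInt_iff]

lemma Zpow_eq_diagonal (d : ℕ) (t : ℤ) :
    Zpow d t = Matrix.diagonal fun j : Fin d => rootPow d (t * ((j : ℕ) : ℤ)) := by
  rw [Zpow]
  congr 1
  funext j
  rw [rootPow]
  congr 1
  push_cast
  ring

lemma Zpow_add (d : ℕ) (s t : ℤ) : Zpow d (s + t) = Zpow d s * Zpow d t := by
  simp only [Zpow_eq_diagonal, Matrix.diagonal_mul_diagonal, ← rootPow_add, add_mul]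

lemma Xpow_add {d : ℕ} [NeZero d] (s t : ℤ) : Xpow d (s + t) = Xpow d s * Xpow d t := by
  ext i j
  rw [Matrix.mul_apply]
  simp only [Xpow_apply_eq_finOfInt t, mul_ite, mul_one, mul_zero, Finset.sum_ite_eq',
    Finset.mem_univ, if_true]
  rw [Xpow_apply, Xpow_apply]
  refine if_congr ?_ rfl rfl
  have h := (finOfInt_modEq d (((j : ℕ) : ℤ) + t)).add_right s
  have e : ((j : ℕ) : ℤ) + t + s = ((j : ℕ) : ℤ) + (s + t) := by ring
  rw [e] at h
  exact ⟨fun hi => hi.trans h.symm, fun hi => hi.trans h⟩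

lemma Xpow_zero (d : ℕ) : Xpow d 0 = 1 := by
  ext i j
  rw [Xpow_apply, add_zero, Matrix.one_apply]
  exact if_congr fin_modEq_iff rfl rfl

lemma Zpow_zero (d : ℕ) [NeZero d] : Zpow d 0 = 1 := by
  have h : rootPow d 0 = 1 := rootPow_eq_one_iff.2 (dvd_zero _)
  simp [Zpow_eq_diagonal, h]

lemma Xpow_congr {d : ℕ} {s t : ℤ} (h : s ≡ t [ZMOD d]) : Xpow d s = Xpow d t := by
  ext i j
  rw [Xpow_apply, Xpow_apply]
  have h' := h.add_left ((j : ℕ) : ℤ)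
  exact if_congr ⟨fun hi => hi.trans h', fun hi => hi.trans h'.symm⟩ rfl rfl

lemma Zpow_congr {d : ℕ} [NeZero d] {s t : ℤ} (h : s ≡ t [ZMOD d]) : Zpow d s = Zpow d t := by
  rw [Zpow_eq_diagonal, Zpow_eq_diagonal]
  congr 1
  funext j
  exact rootPow_eq_iff.2 (h.mul_right _)

lemma GPM_congr {d : ℕ} [NeZero d] {s s' t t' : ℤ} (hs : s ≡ s' [ZMOD d])
    (ht : t ≡ t' [ZMOD d]) : GPM d s t = GPM d s' t' := by
  rw [GPM, GPM, Xpow_congr hs, Zpow_congr ht]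

lemma GPM_zero_zero (d : ℕ) [NeZero d] : GPM d 0 0 = 1 := by
  rw [GPM, Xpow_zero, Zpow_zero, one_mul]

lemma GPM_zero_right (d : ℕ) [NeZero d] (s : ℤ) : GPM d s 0 = Xpow d s := by
  rw [GPM, Zpow_zero, mul_one]

lemma GPM_zero_left (d : ℕ) (t : ℤ) : GPM d 0 t = Zpow d t := by
  rw [GPM, Xpow_zero, one_mul]

lemma GPM_apply {d : ℕ} (s t : ℤ) (i j : Fin d) :
    GPM d s t i j = Xpow d s i j * rootPow d (t * ((j : ℕ) : ℤ)) := by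
  rw [GPM, Zpow_eq_diagonal, Matrix.mul_diagonal]

lemma Zpow_mul_Xpow {d : ℕ} [NeZero d] (s t : ℤ) :
    Zpow d t * Xpow d s = rootPow d (t * s) • (Xpow d s * Zpow d t) := by
  ext i j
  rw [Zpow_eq_diagonal, Matrix.diagonal_mul, Matrix.smul_apply, Matrix.mul_diagonal, Xpow_apply]
  split_ifs with h
  · rw [mul_one, one_mul, smul_eq_mul, ← rootPow_add, rootPow_eq_iff]
    have h' := h.mul_left t
    rwa [mul_add, add_comm] at h'
  · simp

lemma GPM_mul {d : ℕ} [NeZero d] (s t s' t' : ℤ) :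
    GPM d s t * GPM d s' t' = rootPow d (t * s') • GPM d (s + s') (t + t') := by
  simp only [GPM]
  rw [mul_assoc, ← mul_assoc (Zpow d t), Zpow_mul_Xpow, Xpow_add, Zpow_add]
  simp only [Matrix.smul_mul, Matrix.mul_smul, mul_assoc]

lemma GPM_commutation {d : ℕ} [NeZero d] (s t s' t' : ℤ) :
    GPM d s' t' * GPM d s t =
      rootPow d (s * t' - s' * t) • (GPM d s t * GPM d s' t') := by
  rw [GPM_mul, GPM_mul, smul_smul, ← rootPow_add, add_comm s' s, add_comm t' t]
  congr 2
  ring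

lemma conjTranspose_Xpow {d : ℕ} (s : ℤ) : (Xpow d s)ᴴ = Xpow d (-s) := by
  ext i j
  rw [Matrix.conjTranspose_apply, Xpow_apply, Xpow_apply]
  have h : ((j : ℕ) : ℤ) ≡ ((i : ℕ) : ℤ) + s [ZMOD d] ↔
      ((i : ℕ) : ℤ) ≡ ((j : ℕ) : ℤ) + -s [ZMOD d] := by
    rw [Int.modEq_iff_dvd, Int.modEq_iff_dvd, ← dvd_neg]
    ring_nf
  simp only [h]
  split_ifs <;> simp

lemma conjTranspose_Zpow {d : ℕ} (t : ℤ) : (Zpow d t)ᴴ = Zpow d (-t) := by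
  rw [Zpow_eq_diagonal, Zpow_eq_diagonal, Matrix.diagonal_conjTranspose]
  congr 1
  funext j
  rw [Pi.star_apply, star_rootPow, neg_mul]

lemma conjTranspose_GPM_mul_self {d : ℕ} [NeZero d] (s t : ℤ) :
    (GPM d s t)ᴴ * GPM d s t = 1 := by
  rw [GPM, Matrix.conjTranspose_mul, conjTranspose_Xpow, conjTranspose_Zpow, mul_assoc,
    ← mul_assoc (Xpow d (-s)), ← Xpow_add, neg_add_cancel, Xpow_zero, one_mul, ← Zpow_add,
    neg_add_cancel, Zpow_zero]

section PhaseEq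

variable {n : Type*} {A B C A' B' : Matrix n n ℂ}

lemma PhaseEq.refl (A : Matrix n n ℂ) : PhaseEq A A := ⟨1, by simp, by simp⟩

lemma PhaseEq.symm (h : PhaseEq A B) : PhaseEq B A := by
  obtain ⟨c, hc, rfl⟩ := h
  have h0 : c ≠ 0 := by
    rintro rfl
    simp at hc
  exact ⟨c⁻¹, by simp [hc], by rw [smul_smul, inv_mul_cancel₀ h0, one_smul]⟩

lemma PhaseEq.trans (h : PhaseEq A B) (h' : PhaseEq B C) : PhaseEq A C := by
  obtain ⟨c, hc, rfl⟩ := h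
  obtain ⟨c', hc', rfl⟩ := h'
  exact ⟨c * c', by simp [hc, hc'], by rw [smul_smul]⟩

variable [Fintype n]

lemma PhaseEq.mul (h : PhaseEq A B) (h' : PhaseEq A' B') : PhaseEq (A * A') (B * B') := by
  obtain ⟨c, hc, rfl⟩ := h
  obtain ⟨c', hc', rfl⟩ := h'
  exact ⟨c * c', by simp [hc, hc'], by
    rw [Matrix.smul_mul, Matrix.mul_smul, smul_smul]⟩

variable [DecidableEq n]

lemma PhaseEq.pow (h : PhaseEq A B) (k : ℕ) : PhaseEq (A ^ k) (B ^ k) := by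
  obtain ⟨c, hc, rfl⟩ := h
  exact ⟨c ^ k, by simp [hc], smul_pow c B k⟩

lemma conj_pow_of_mem_unitaryGroup {W : Matrix n n ℂ} (hW : W ∈ Matrix.unitaryGroup n ℂ)
    (A : Matrix n n ℂ) (k : ℕ) : (W * A * Wᴴ) ^ k = W * A ^ k * Wᴴ := by
  have h1 : W * Wᴴ = 1 := Matrix.mem_unitaryGroup_iff.1 hW
  have h2 : Wᴴ * W = 1 := Matrix.mem_unitaryGroup_iff'.1 hW
  induction k with
  | zero => simp [h1]
  | succ k ih =>
    rw [pow_succ, ih, pow_succ]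
    simp only [mul_assoc]
    rw [← mul_assoc Wᴴ W, h2, one_mul]

lemma conj_mul_conj_of_mem_unitaryGroup {W : Matrix n n ℂ}
    (hW : W ∈ Matrix.unitaryGroup n ℂ) (A B : Matrix n n ℂ) :
    (W * A * Wᴴ) * (W * B * Wᴴ) = W * (A * B) * Wᴴ := by
  have h2 : Wᴴ * W = 1 := Matrix.mem_unitaryGroup_iff'.1 hW
  simp only [mul_assoc]
  rw [← mul_assoc Wᴴ W, h2, one_mul]

end PhaseEq

lemma phaseEq_GPM_mul {d : ℕ} [NeZero d] (s t s' t' : ℤ) :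
    PhaseEq (GPM d s t * GPM d s' t') (GPM d (s + s') (t + t')) :=
  ⟨_, norm_rootPow d (t * s'), GPM_mul s t s' t'⟩

lemma phaseEq_GPM_pow {d : ℕ} [NeZero d] (s t : ℤ) (k : ℕ) :
    PhaseEq (GPM d s t ^ k) (GPM d (k * s) (k * t)) := by
  induction k with
  | zero => simpa [GPM_zero_zero] using PhaseEq.refl _
  | succ k ih =>
    rw [pow_succ]
    refine (ih.mul (PhaseEq.refl _)).trans ?_
    convert phaseEq_GPM_mul (d := d) (k * s) (k * t) s t using 2 <;> push_cast <;> ring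

lemma dvd_of_phaseEq_GPM_one {d : ℕ} [NeZero d] {s t : ℤ} (h : PhaseEq (GPM d s t) 1) :
    (d : ℤ) ∣ s ∧ (d : ℤ) ∣ t := by
  obtain ⟨c, hc, h⟩ := h
  have hc0 : c ≠ 0 := by
    rintro rfl
    simp at hc
  have hs : (d : ℤ) ∣ s := by
    by_contra hs
    have h0 := congrFun (congrFun h 0) 0
    rw [GPM_apply, Xpow_apply, if_neg] at h0
    · simp at h0
      exact hc0 h0.symm
    · rw [Int.modEq_iff_dvd]
      simpa using hs
  refine ⟨hs, ?_⟩
  have hX : Xpow d s = 1 := by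
    rw [← Xpow_zero]
    exact Xpow_congr (Int.modEq_zero_iff_dvd.2 hs)
  have key : ∀ x : ℤ, rootPow d (t * x) = c := fun x => by
    have hx := congrFun (congrFun h (finOfInt d x)) (finOfInt d x)
    rw [GPM_apply, hX] at hx
    simp at hx
    rw [← hx, rootPow_eq_iff]
    exact (finOfInt_modEq d x).symm.mul_left t
  have h01 := (key 1).trans (key 0).symm
  rw [rootPow_eq_iff, mul_one, mul_zero] at h01
  exact Int.modEq_zero_iff_dvd.1 h01

lemma star_mulVec_dotProduct_mulVec {n : Type*} [Fintype n] [DecidableEq n]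
    {U : Matrix n n ℂ} (hU : Uᴴ * U = 1) (x y : n → ℂ) :
    star (U *ᵥ x) ⬝ᵥ (U *ᵥ y) = star x ⬝ᵥ y := by
  rw [Matrix.star_mulVec, Matrix.dotProduct_mulVec, Matrix.vecMul_vecMul, hU, Matrix.vecMul_one]

open scoped ComplexOrder in
lemma exists_unit_eigenvector {n : Type*} [Fintype n] [DecidableEq n] [Nonempty n]
    (B : Matrix n n ℂ) : ∃ (μ : ℂ) (v : n → ℂ), star v ⬝ᵥ v = 1 ∧ B *ᵥ v = μ • v := by
  obtain ⟨μ, hμ⟩ := Module.End.exists_eigenvalue (Matrix.toLin' B)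
  obtain ⟨v, hv⟩ := hμ.exists_hasEigenvector
  have hBv : B *ᵥ v = μ • v := by simpa using hv.apply_eq_smul
  have hN : star v ⬝ᵥ v = ((∑ i, ‖v i‖ ^ 2 : ℝ) : ℂ) := by
    simp only [dotProduct, Pi.star_apply]
    push_cast
    exact Finset.sum_congr rfl fun i _ => Complex.conj_mul' (v i)
  set r : ℝ := ∑ i, ‖v i‖ ^ 2 with hr
  have hr0 : 0 ≤ r := Finset.sum_nonneg fun i _ => by positivity
  have hr1 : (r : ℂ) ≠ 0 := by
    rw [← hN]
    exact fun h => hv.2 (dotProduct_star_self_eq_zero.1 h)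
  have hs : ((Real.sqrt r : ℝ) : ℂ) * ((Real.sqrt r : ℝ) : ℂ) = r := by
    exact_mod_cast Real.mul_self_sqrt hr0
  have hs0 : ((Real.sqrt r : ℝ) : ℂ) ≠ 0 := fun h => hr1 (by rw [← hs, h, zero_mul])
  refine ⟨μ, ((Real.sqrt r : ℝ) : ℂ)⁻¹ • v, ?_, ?_⟩
  · rw [star_smul, smul_dotProduct, dotProduct_smul, hN, ← hs]
    simp only [smul_eq_mul, star_inv₀, Complex.star_def, Complex.conj_ofReal]
    field_simp
  · rw [Matrix.mulVec_smul, hBv, smul_comm]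

/-- A pair of unitaries with the commutation relation of `(X, Z)`, the first of order dividing
`d`, is unitarily equivalent to `(X, Z)` up to a phase of `Z`. -/
lemma exists_unitary_of_pow_eq_one {d : ℕ} [NeZero d] {A B : Matrix (Fin d) (Fin d) ℂ}
    (hA : Aᴴ * A = 1) (hB : Bᴴ * B = 1) (hAd : A ^ d = 1)
    (hBA : B * A = rootPow d 1 • (A * B)) :
    ∃ W ∈ Matrix.unitaryGroup (Fin d) ℂ,
      W * Xpow d 1 = A * W ∧ ∃ μ : ℂ, ‖μ‖ = 1 ∧ μ • (W * Zpow d 1) = B * W := by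
  obtain ⟨μ, v, hv, hBv⟩ := exists_unit_eigenvector B
  have hw : ∀ k : ℕ, B *ᵥ (A ^ k *ᵥ v) = (μ * rootPow d k) • (A ^ k *ᵥ v) := by
    intro k
    induction k with
    | zero =>
      have h : rootPow d 0 = 1 := rootPow_eq_one_iff.2 (dvd_zero _)
      simp [hBv, h]
    | succ k ih =>
      rw [pow_succ', ← Matrix.mulVec_mulVec, Matrix.mulVec_mulVec _ B, hBA, Matrix.smul_mulVec,
        ← Matrix.mulVec_mulVec, ih, Matrix.mulVec_smul, smul_smul]
      congr 1
      push_cast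
      rw [rootPow_add]
      ring
  have hμ : star μ * μ = 1 := by
    have h := star_mulVec_dotProduct_mulVec hB v v
    rw [hBv, star_smul, smul_dotProduct, dotProduct_smul, hv] at h
    simpa using h
  have hnorm : ∀ k : ℕ, star (A ^ k *ᵥ v) ⬝ᵥ (A ^ k *ᵥ v) = 1 := by
    intro k
    induction k with
    | zero => simpa using hv
    | succ k ih =>
      rw [pow_succ', ← Matrix.mulVec_mulVec, star_mulVec_dotProduct_mulVec hA, ih]
  have horth : ∀ k l : Fin d, k ≠ l →
      star (A ^ (k : ℕ) *ᵥ v) ⬝ᵥ (A ^ (l : ℕ) *ᵥ v) = 0 := by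
    intro k l hkl
    have h := star_mulVec_dotProduct_mulVec hB (A ^ (k : ℕ) *ᵥ v) (A ^ (l : ℕ) *ᵥ v)
    rw [hw, hw, star_smul, smul_dotProduct, dotProduct_smul, star_mul', star_rootPow] at h
    simp only [smul_eq_mul] at h
    have hne : rootPow d (-((k : ℕ) : ℤ) + ((l : ℕ) : ℤ)) ≠ 1 := by
      rw [Ne, rootPow_eq_one_iff, neg_add_eq_sub, ← Int.modEq_iff_dvd, fin_modEq_iff]
      exact hkl
    rw [rootPow_add] at hne
    have h' : (rootPow d (-((k : ℕ) : ℤ)) * rootPow d ((l : ℕ) : ℤ) - 1) *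
        (star (A ^ (k : ℕ) *ᵥ v) ⬝ᵥ (A ^ (l : ℕ) *ᵥ v)) = 0 := by
      linear_combination h - (rootPow d (-((k : ℕ) : ℤ)) * rootPow d ((l : ℕ) : ℤ)) *
        (star (A ^ (k : ℕ) *ᵥ v) ⬝ᵥ (A ^ (l : ℕ) *ᵥ v)) * hμ
    exact (mul_eq_zero.1 h').resolve_left (sub_ne_zero.2 hne)
  refine ⟨Matrix.of fun i k : Fin d => (A ^ (k : ℕ) *ᵥ v) i, ?_, ?_, μ, ?_, ?_⟩
  · rw [Matrix.mem_unitaryGroup_iff']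
    ext k l
    rw [Matrix.one_apply]
    change star (A ^ (k : ℕ) *ᵥ v) ⬝ᵥ (A ^ (l : ℕ) *ᵥ v) = _
    split_ifs with hkl
    · rw [hkl, hnorm]
    · exact horth k l hkl
  · ext i k
    rw [Matrix.mul_apply]
    simp only [Xpow_apply_eq_finOfInt, mul_ite, mul_one, mul_zero, Finset.sum_ite_eq',
      Finset.mem_univ, if_true, Matrix.of_apply]
    change _ = (A *ᵥ (A ^ (k : ℕ) *ᵥ v)) i
    have hk : ((finOfInt d (((k : ℕ) : ℤ) + 1) : Fin d) : ℕ) ≡ (k : ℕ) + 1 [MOD d] := by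
      have := finOfInt_modEq d (((k : ℕ) : ℤ) + 1)
      exact_mod_cast this
    rw [Matrix.mulVec_mulVec, ← pow_succ', pow_eq_pow_mod _ hAd, hk, ← pow_eq_pow_mod _ hAd]
  · have h : (‖μ‖ : ℂ) ^ 2 = 1 := by rw [← hμ, ← Complex.conj_mul']; rfl
    have h' : ‖μ‖ ^ 2 = 1 := by exact_mod_cast h
    exact (pow_eq_one_iff_of_nonneg (norm_nonneg μ) two_ne_zero).1 h'
  · ext i k
    change _ = (B *ᵥ (A ^ (k : ℕ) *ᵥ v)) i
    rw [hw, Matrix.smul_apply, Zpow_eq_diagonal, Matrix.mul_diagonal, one_mul]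
    simp only [Matrix.of_apply, Pi.smul_apply, smul_eq_mul]
    ring

/-- The Clifford unitary of a pair of generalized Pauli matrices of symplectic product `1`. -/
lemma exists_clifford {d : ℕ} [NeZero d] {s t s' t' : ℤ} (h : s * t' - s' * t ≡ 1 [ZMOD d]) :
    ∃ W ∈ Matrix.unitaryGroup (Fin d) ℂ, PhaseEq (W * Xpow d 1 * Wᴴ) (GPM d s t) ∧
      PhaseEq (W * Zpow d 1 * Wᴴ) (GPM d s' t') := by
  have hpow : PhaseEq (GPM d s t ^ d) 1 := by
    rw [← GPM_zero_zero d, ← GPM_congr (d := d) (s := d * s) (t := d * t)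
      (Int.modEq_zero_iff_dvd.2 (dvd_mul_right _ _))
      (Int.modEq_zero_iff_dvd.2 (dvd_mul_right _ _))]
    exact phaseEq_GPM_pow s t d
  obtain ⟨c, hc, hcd⟩ := hpow
  obtain ⟨z, hz⟩ := IsAlgClosed.exists_pow_nat_eq c⁻¹ (NeZero.pos d)
  have hz1 : ‖z‖ = 1 := by
    have h1 : ‖z‖ ^ d = 1 := by rw [← norm_pow, hz, norm_inv, hc, inv_one]
    exact (pow_eq_one_iff_of_nonneg (norm_nonneg z) (NeZero.ne d)).1 h1
  have hzz : star z * z = 1 := by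
    rw [Complex.star_def, Complex.conj_mul', hz1]
    simp
  have hc0 : c ≠ 0 := by
    rintro rfl
    simp at hc
  obtain ⟨W, hW, hX, μ, hμ, hZ⟩ := exists_unitary_of_pow_eq_one (d := d)
    (A := z • GPM d s t) (B := GPM d s' t')
    (by rw [Matrix.conjTranspose_smul, Matrix.smul_mul, Matrix.mul_smul, smul_smul, hzz,
          conjTranspose_GPM_mul_self, one_smul])
    (conjTranspose_GPM_mul_self s' t')
    (by rw [smul_pow, hz, hcd, smul_smul, inv_mul_cancel₀ hc0, one_smul])
    (by rw [Matrix.mul_smul, Matrix.smul_mul, GPM_commutation, rootPow_eq_iff.2 h, smul_comm])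
  have hWW : W * Wᴴ = 1 := Matrix.mem_unitaryGroup_iff.1 hW
  refine ⟨W, hW, ⟨z, hz1, ?_⟩, PhaseEq.symm ⟨μ, hμ, ?_⟩⟩
  · rw [hX, mul_assoc, hWW, mul_one]
  · rw [← Matrix.smul_mul, hZ, mul_assoc, hWW, mul_one]

/-- The map multiplying remainders modulo `g` by `D` and fixing quotients. -/
def dilateRemainder (g D x : ℤ) : ℤ := D * (x % g) + g * (x / g)

lemma dilateRemainder_add_mul {g : ℤ} (hg : 0 < g) (D x k : ℤ) :
    dilateRemainder g D (x + g * k) = dilateRemainder g D x + g * k := by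
  rw [dilateRemainder, dilateRemainder, Int.add_mul_emod_self_left,
    Int.add_mul_ediv_left _ _ hg.ne']
  ring

lemma dilateRemainder_modEq_iff {g D d : ℤ} (hg : 0 < g) (hgd : g ∣ d) (hD : IsCoprime D g)
    {x y : ℤ} : dilateRemainder g D x ≡ dilateRemainder g D y [ZMOD d] ↔ x ≡ y [ZMOD d] := by
  have of_mod : ∀ {a b : ℤ}, g ∣ b - a →
      dilateRemainder g D b - dilateRemainder g D a = b - a := by
    rintro a b ⟨k, hk⟩
    obtain rfl : b = a + g * k := by linarith
    rw [dilateRemainder_add_mul hg]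
    ring
  rw [Int.modEq_iff_dvd, Int.modEq_iff_dvd]
  constructor
  · intro h
    have h1 : g ∣ D * (y % g - x % g) := by
      have h2 : dilateRemainder g D y - dilateRemainder g D x =
          D * (y % g - x % g) + g * (y / g - x / g) := by
        simp only [dilateRemainder]
        ring
      have h3 := hgd.trans h
      rw [h2] at h3
      exact (dvd_add_left (dvd_mul_right _ _)).1 h3
    have h4 : g ∣ y - x := by
      have h5 : y - x = (y % g - x % g) + g * (y / g - x / g) := by
        linarith [Int.emod_add_mul_ediv x g, Int.emod_add_mul_ediv y g]
      rw [h5]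
      exact dvd_add (hD.symm.dvd_of_dvd_mul_left h1) (dvd_mul_right _ _)
    rwa [of_mod h4] at h
  · intro h
    rwa [of_mod (hgd.trans h)]

lemma exists_unitary_dilation {d : ℕ} [NeZero d] {g h D : ℤ} (hg : 0 < g) (hgd : g ∣ d)
    (hD : IsCoprime D g) (hgh : D * (h * g) ≡ h * g [ZMOD d]) :
    ∃ P ∈ Matrix.unitaryGroup (Fin d) ℂ,
      P * Xpow d g * Pᴴ = Xpow d g ∧ P * Zpow d h * Pᴴ = Zpow d (D * h) := by
  let f : Fin d → Fin d := fun i => finOfInt d (dilateRemainder g D ((i : ℕ) : ℤ))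
  have hf : ∀ i, (((f i : Fin d) : ℕ) : ℤ) ≡ dilateRemainder g D ((i : ℕ) : ℤ) [ZMOD d] :=
    fun i => finOfInt_modEq d _
  have hinj : Function.Injective f := by
    intro i j hij
    rw [← fin_modEq_iff, ← dilateRemainder_modEq_iff hg hgd hD]
    have := hf i
    rw [hij] at this
    exact this.symm.trans (hf j)
  let σ : Equiv.Perm (Fin d) := Equiv.ofBijective f (Finite.injective_iff_bijective.1 hinj)
  have hconj : ∀ M : Matrix (Fin d) (Fin d) ℂ,
      σ.permMatrix ℂ * M * (σ.permMatrix ℂ)ᴴ = M.submatrix σ σ := by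
    intro M
    rw [Matrix.conjTranspose_permMatrix, Equiv.Perm.permMatrix, Equiv.Perm.permMatrix,
      PEquiv.toMatrix_toPEquiv_mul, PEquiv.mul_toMatrix_toPEquiv, Matrix.submatrix_submatrix]
    rfl
  refine ⟨σ.permMatrix ℂ, ?_, ?_, ?_⟩
  · rw [Matrix.mem_unitaryGroup_iff]
    have h1 := hconj 1
    rw [mul_one, Matrix.submatrix_one_equiv] at h1
    exact h1
  · rw [hconj]
    ext i j
    rw [Matrix.submatrix_apply, Xpow_apply, Xpow_apply]
    refine if_congr ?_ rfl rfl
    change ((f i : ℕ) : ℤ) ≡ ((f j : ℕ) : ℤ) + g [ZMOD d] ↔ _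
    rw [← dilateRemainder_modEq_iff hg hgd hD (x := ((i : ℕ) : ℤ))]
    have h1 := dilateRemainder_add_mul hg D ((j : ℕ) : ℤ) 1
    rw [mul_one] at h1
    rw [h1]
    have h2 := (hf j).add_right g
    exact ⟨fun h => (hf i).symm.trans (h.trans h2), fun h => (hf i).trans (h.trans h2.symm)⟩
  · rw [hconj, Zpow_eq_diagonal, Zpow_eq_diagonal, Matrix.submatrix_diagonal_equiv]
    congr 1
    funext i
    rw [Function.comp_apply, rootPow_eq_iff]
    refine ((hf i).mul_left h).trans ?_
    have h1 := hgh.symm.mul_right (((i : ℕ) : ℤ) / g)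
    rw [Int.modEq_iff_dvd] at h1 ⊢
    convert h1 using 1
    rw [dilateRemainder]
    linear_combination (-D * h) * (Int.emod_add_mul_ediv ((i : ℕ) : ℤ) g)

section Conjugation

variable {d : ℕ} {W : Matrix (Fin d) (Fin d) ℂ}

lemma PhaseEq.conj {A B : Matrix (Fin d) (Fin d) ℂ} (h : PhaseEq A B) :
    PhaseEq (W * A * Wᴴ) (W * B * Wᴴ) :=
  ((PhaseEq.refl W).mul h).mul (PhaseEq.refl Wᴴ)

variable [NeZero d]

lemma phaseEq_conj_GPM_mul (hW : W ∈ Matrix.unitaryGroup (Fin d) ℂ) {a b s t : ℤ}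
    (h : PhaseEq (W * GPM d a b * Wᴴ) (GPM d s t)) (m : ℤ) :
    PhaseEq (W * GPM d (m * a) (m * b) * Wᴴ) (GPM d (m * s) (m * t)) := by
  have hm := finOfInt_modEq d m
  generalize ((finOfInt d m : Fin d) : ℕ) = n at hm
  rw [← GPM_congr (hm.mul_right a) (hm.mul_right b), ← GPM_congr (hm.mul_right s) (hm.mul_right t)]
  refine (phaseEq_GPM_pow a b n).symm.conj.trans ?_
  rw [← conj_pow_of_mem_unitaryGroup hW]
  exact (h.pow n).trans (phaseEq_GPM_pow s t n)

lemma phaseEq_conj_GPM_add (hW : W ∈ Matrix.unitaryGroup (Fin d) ℂ) {a b s t a' b' s' t' : ℤ}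
    (h : PhaseEq (W * GPM d a b * Wᴴ) (GPM d s t))
    (h' : PhaseEq (W * GPM d a' b' * Wᴴ) (GPM d s' t')) :
    PhaseEq (W * GPM d (a + a') (b + b') * Wᴴ) (GPM d (s + s') (t + t')) := by
  refine (phaseEq_GPM_mul a b a' b').symm.conj.trans ?_
  rw [← conj_mul_conj_of_mem_unitaryGroup hW]
  exact (h.mul h').trans (phaseEq_GPM_mul s t s' t')

lemma dvd_of_phaseEq_conj_GPM (hW : W ∈ Matrix.unitaryGroup (Fin d) ℂ) {a b s t : ℤ}
    (h : PhaseEq (W * GPM d a b * Wᴴ) (GPM d s t)) (hs : (d : ℤ) ∣ s) (ht : (d : ℤ) ∣ t) :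
    (d : ℤ) ∣ a ∧ (d : ℤ) ∣ b := by
  have h1 : W * Wᴴ = 1 := Matrix.mem_unitaryGroup_iff.1 hW
  have h2 : Wᴴ * W = 1 := Matrix.mem_unitaryGroup_iff'.1 hW
  rw [GPM_congr (Int.modEq_zero_iff_dvd.2 hs) (Int.modEq_zero_iff_dvd.2 ht),
    GPM_zero_zero] at h
  apply dvd_of_phaseEq_GPM_one
  obtain ⟨c, hc, h⟩ := h
  refine ⟨c, hc, ?_⟩
  calc GPM d a b = Wᴴ * (W * GPM d a b * Wᴴ) * W := by
        simp only [mul_assoc, h2, mul_one]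
        rw [← mul_assoc, h2, one_mul]
    _ = c • 1 := by rw [h, Matrix.mul_smul, mul_one, Matrix.smul_mul, h2]

/-- Conjugation by a unitary preserves symplectic products modulo `d`. -/
lemma modEq_of_phaseEq_conj_GPM (hW : W ∈ Matrix.unitaryGroup (Fin d) ℂ)
    {a b s t a' b' s' t' : ℤ} (h : PhaseEq (W * GPM d a b * Wᴴ) (GPM d s t))
    (h' : PhaseEq (W * GPM d a' b' * Wᴴ) (GPM d s' t')) :
    s * t' - s' * t ≡ a * b' - a' * b [ZMOD d] := by
  obtain ⟨c, hc, h⟩ := h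
  obtain ⟨c', hc', h'⟩ := h'
  have hc0 : c ≠ 0 := by
    rintro rfl
    simp at hc
  have hc0' : c' ≠ 0 := by
    rintro rfl
    simp at hc'
  have e1 := conj_mul_conj_of_mem_unitaryGroup hW (GPM d a' b') (GPM d a b)
  have e2 := conj_mul_conj_of_mem_unitaryGroup hW (GPM d a b) (GPM d a' b')
  rw [GPM_commutation, Matrix.mul_smul, Matrix.smul_mul, ← e2, h, h'] at e1
  simp only [Matrix.smul_mul, Matrix.mul_smul, smul_smul] at e1
  rw [GPM_commutation, GPM_mul, smul_smul, smul_smul, smul_smul] at e1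
  have hne : GPM d (s + s') (t + t') ≠ 0 := by
    intro h0
    have h1 := conjTranspose_GPM_mul_self (d := d) (s + s') (t + t')
    rw [h0, mul_zero] at h1
    exact zero_ne_one h1
  have e3 := smul_left_injective ℂ hne e1
  rw [← rootPow_eq_iff]
  have hr := rootPow_ne_zero d (t * s')
  have e4 : (c * c' * rootPow d (t * s')) *
      (rootPow d (s * t' - s' * t) - rootPow d (a * b' - a' * b)) = 0 := by
    linear_combination e3
  exact sub_eq_zero.1 ((mul_eq_zero.1 e4).resolve_left (mul_ne_zero (mul_ne_zero hc0 hc0') hr))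

end Conjugation

lemma gcd_gcd_eq_one_of_not_dvd {p : ℕ} (hp : p.Prime) {u v : ℤ}
    (h : ¬((p : ℤ) ∣ u ∧ (p : ℤ) ∣ v)) : Int.gcd u (Int.gcd v (p : ℤ) : ℤ) = 1 := by
  have h1 : Int.gcd u (Int.gcd v (p : ℤ) : ℤ) ∣ p := by
    have := (Int.gcd_dvd_right u (Int.gcd v (p : ℤ) : ℤ)).trans (Int.gcd_dvd_right v (p : ℤ))
    exact_mod_cast this
  refine (hp.eq_one_or_self_of_dvd _ h1).resolve_right fun h2 => h ?_
  have h3 := Int.gcd_dvd_left u (Int.gcd v (p : ℤ) : ℤ)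
  have h4 := (Int.gcd_dvd_right u (Int.gcd v (p : ℤ) : ℤ)).trans (Int.gcd_dvd_left v (p : ℤ))
  rw [h2] at h3 h4
  exact ⟨h3, h4⟩

/-- Conjugating `X^{p^γ}` and `Z^{p^β}` into scaled Pauli matrices forces the determinant of the
exponents to be prime to `p`. -/
lemma not_dvd_det_of_phaseEq_conj {p : ℕ} (hp : p.Prime) {α β γ : ℕ} (hβ : β < α) (hγ : γ < α)
    [NeZero (p ^ α)] {u₁ v₁ u₂ v₂ : ℤ} {W : Matrix (Fin (p ^ α)) (Fin (p ^ α)) ℂ}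
    (hW : W ∈ Matrix.unitaryGroup (Fin (p ^ α)) ℂ)
    (hX : PhaseEq (W * GPM (p ^ α) ((p : ℤ) ^ γ) 0 * Wᴴ)
      (GPM (p ^ α) (u₁ * (p : ℤ) ^ γ) (v₁ * (p : ℤ) ^ γ)))
    (hZ : PhaseEq (W * GPM (p ^ α) 0 ((p : ℤ) ^ β) * Wᴴ)
      (GPM (p ^ α) (u₂ * (p : ℤ) ^ β) (v₂ * (p : ℤ) ^ β))) :
    ¬ (p : ℤ) ∣ u₁ * v₂ - u₂ * v₁ := by
  have hpZ : Prime (p : ℤ) := Nat.prime_iff_prime_int.1 hp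
  obtain ⟨k, rfl⟩ : ∃ k, α = k + 1 := ⟨α - 1, by omega⟩
  have hgk : (p : ℤ) ^ (k - γ) * (p : ℤ) ^ γ = (p : ℤ) ^ k := by
    rw [← pow_add]; congr 1; omega
  have hbk : (p : ℤ) ^ (k - β) * (p : ℤ) ^ β = (p : ℤ) ^ k := by
    rw [← pow_add]; congr 1; omega
  have key : ∀ a b : ℤ, (p : ℤ) ∣ a * u₁ + b * u₂ → (p : ℤ) ∣ a * v₁ + b * v₂ →
      (p : ℤ) ∣ a ∧ (p : ℤ) ∣ b := by
    intro a b hu hv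
    have h := phaseEq_conj_GPM_add hW (phaseEq_conj_GPM_mul hW hX (a * (p : ℤ) ^ (k - γ)))
      (phaseEq_conj_GPM_mul hW hZ (b * (p : ℤ) ^ (k - β)))
    have hcast : (((p ^ (k + 1) : ℕ)) : ℤ) = p * (p : ℤ) ^ k := by push_cast; ring
    have hpk : (p : ℤ) ^ k ≠ 0 := pow_ne_zero _ hpZ.ne_zero
    obtain ⟨ha, hb⟩ := dvd_of_phaseEq_conj_GPM hW h
      (by
        rw [hcast]
        refine (mul_dvd_mul_right hu ((p : ℤ) ^ k)).trans (dvd_of_eq ?_)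
        linear_combination (-a * u₁) * hgk - (b * u₂) * hbk)
      (by
        rw [hcast]
        refine (mul_dvd_mul_right hv ((p : ℤ) ^ k)).trans (dvd_of_eq ?_)
        linear_combination (-a * v₁) * hgk - (b * v₂) * hbk)
    rw [hcast] at ha hb
    constructor
    · rw [← mul_dvd_mul_iff_right hpk]
      exact ha.trans (dvd_of_eq (by linear_combination a * hgk))
    · rw [← mul_dvd_mul_iff_right hpk]
      exact hb.trans (dvd_of_eq (by linear_combination b * hbk))
  intro hdet
  obtain ⟨-, hv₁⟩ := key v₂ (-v₁) (hdet.trans (dvd_of_eq (by ring))) ⟨0, by ring⟩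
  obtain ⟨-, hu₁⟩ := key u₂ (-u₁) ⟨0, by ring⟩ (hdet.trans ⟨-1, by ring⟩)
  have h1 := (key 1 0 (by simpa using hu₁) (by simpa using hv₁)).1
  exact hpZ.not_isUnit (isUnit_of_dvd_one h1)

/-- **Corollary 3.1.** The prime-power case `d = p^α` of Theorem 3.1, for
`X^{p^γ}` and `Z^{p^β}` with `0 ≤ β, γ < α`. -/
theorem uc_equiv_prime_power_iff (p : ℕ) (hp : p.Prime) (α : ℕ) (hα : 1 ≤ α)
    (β γ : ℕ) (hβ : β < α) (hγ : γ < α)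
    (u₁ v₁ u₂ v₂ : ℤ)
    (hu₁0 : 0 ≤ u₁) (hu₁ : u₁ < (p : ℤ) ^ (α - γ)) (hv₁0 : 0 ≤ v₁) (hv₁ : v₁ < (p : ℤ) ^ (α - γ))
    (hu₂0 : 0 ≤ u₂) (hu₂ : u₂ < (p : ℤ) ^ (α - β)) (hv₂0 : 0 ≤ v₂) (hv₂ : v₂ < (p : ℤ) ^ (α - β)) :
    (∃ W ∈ Matrix.unitaryGroup (Fin (p ^ α)) ℂ,
        PhaseEq (W * Xpow (p ^ α) ((p : ℤ) ^ γ) * Wᴴ)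
          (GPM (p ^ α) (u₁ * (p : ℤ) ^ γ) (v₁ * (p : ℤ) ^ γ)) ∧
        PhaseEq (W * Zpow (p ^ α) ((p : ℤ) ^ β) * Wᴴ)
          (GPM (p ^ α) (u₂ * (p : ℤ) ^ β) (v₂ * (p : ℤ) ^ β))) ↔
    (Int.gcd u₁ (Int.gcd v₁ (p : ℤ) : ℤ) = 1 ∧
     Int.gcd u₂ (Int.gcd v₂ (p : ℤ) : ℤ) = 1 ∧
     (u₁ * v₂ - u₂ * v₁) * (p : ℤ) ^ (β + γ) ≡ (p : ℤ) ^ (β + γ) [ZMOD ((p : ℤ) ^ α)] ∧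
     Int.gcd (u₁ * v₂ - u₂ * v₁) (p : ℤ) = 1) := by
  have : NeZero (p ^ α) := ⟨pow_ne_zero _ hp.ne_zero⟩
  have hpZ : Prime (p : ℤ) := Nat.prime_iff_prime_int.1 hp
  have hcast : ((p ^ α : ℕ) : ℤ) = (p : ℤ) ^ α := by push_cast; rfl
  rw [← GPM_zero_right (p ^ α) ((p : ℤ) ^ γ), ← GPM_zero_left (p ^ α) ((p : ℤ) ^ β)]
  constructor
  · rintro ⟨W, hW, hX, hZ⟩
    have hdet := not_dvd_det_of_phaseEq_conj hp hβ hγ hW hX hZ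
    refine ⟨gcd_gcd_eq_one_of_not_dvd hp fun h => hdet ?_,
      gcd_gcd_eq_one_of_not_dvd hp fun h => hdet ?_, ?_, ?_⟩
    · exact dvd_sub (h.1.mul_right v₂) (h.2.mul_left u₂)
    · exact dvd_sub (h.2.mul_left u₁) (h.1.mul_right v₁)
    · have h := modEq_of_phaseEq_conj_GPM hW hX hZ
      rw [hcast] at h
      convert h using 1 <;> ring
    · rw [← Int.isCoprime_iff_gcd_eq_one]
      exact ((Prime.coprime_iff_not_dvd hpZ).2 hdet).symm
  · rintro ⟨-, -, hmod, hgcd⟩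
    set D := u₁ * v₂ - u₂ * v₁ with hD
    have hcop : IsCoprime D (p : ℤ) := Int.isCoprime_iff_gcd_eq_one.2 hgcd
    obtain ⟨e, f, hef⟩ : IsCoprime D ((p : ℤ) ^ α) := hcop.pow_right
    have he : e * D ≡ 1 [ZMOD ((p ^ α : ℕ) : ℤ)] := by
      rw [hcast, Int.modEq_iff_dvd]
      exact ⟨f, by linear_combination -hef⟩
    obtain ⟨W, hW, hX, hZ⟩ := exists_clifford (d := p ^ α) (s := u₁) (t := v₁) (s' := e * u₂)
      (t' := e * v₂) (by convert he using 1; rw [hD]; ring)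
    obtain ⟨P, hP, hPX, hPZ⟩ := exists_unitary_dilation (d := p ^ α) (g := (p : ℤ) ^ γ)
      (h := (p : ℤ) ^ β) (D := D) (pow_pos (by exact_mod_cast hp.pos) _)
      (by rw [hcast]; exact pow_dvd_pow _ hγ.le) hcop.pow_right
      (by rw [hcast, ← pow_add]; exact hmod)
    have hWP : ∀ M, W * P * M * (W * P)ᴴ = W * (P * M * Pᴴ) * Wᴴ := fun M => by
      simp only [Matrix.conjTranspose_mul, mul_assoc]
    refine ⟨W * P, mul_mem hW hP, ?_, ?_⟩
    · rw [hWP, GPM_zero_right, hPX, ← GPM_zero_right]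
      rw [← GPM_zero_right] at hX
      have h := phaseEq_conj_GPM_mul hW hX ((p : ℤ) ^ γ)
      rwa [mul_one, mul_zero, mul_comm _ u₁, mul_comm _ v₁] at h
    · rw [hWP, GPM_zero_left, hPZ, ← GPM_zero_left]
      rw [← GPM_zero_left] at hZ
      have h := phaseEq_conj_GPM_mul hW hZ (D * (p : ℤ) ^ β)
      have hscale : ∀ w : ℤ, D * (p : ℤ) ^ β * (e * w) ≡ w * (p : ℤ) ^ β
          [ZMOD ((p ^ α : ℕ) : ℤ)] := fun w => by
        have h1 := he.mul_right (w * (p : ℤ) ^ β)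
        rw [one_mul] at h1
        convert h1 using 1
        ring
      rwa [mul_one, mul_zero, GPM_congr (hscale u₂) (hscale v₂)] at h
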